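/- arXiv:0912.0832 — 2 statements merged into one kernel-verified Lean document; each statement's English description precedes it below -/
import Mathlib

section
/- Let E be a finite-dimensional real normed vector space, A : E → E linear, v ∈ E, w ∈ E* (a continuous linear functional), c ∈ ℝ, and suppose the linear map S : E × ℝ → E × ℝ, S(z,s) = (Az + s·v, ⟨w,z⟩ + c·s), is bijective. Let U ⊆ E be open with ⟨w,z⟩ + c ≠ 0 for all z ∈ U and define F : U → E by F(z) = (Az + v)/(⟨w,z⟩ + c). Then F is C² on U, the derivative F′(z) is an invertible linear map for every z ∈ U, and for ξ(z) := −w/(⟨w,z⟩ + c) ∈ E* one has, for all z ∈ U and all u, u′ ∈ E: F′(z)⁻¹·F″(z)(u,u′) = ⟨ξ(z),u⟩·u′ + ⟨ξ(z),u′⟩·u. -/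
/-!
The map induced on the affine chart by a linear map `S` of the homogeneous coordinates is
`F z = d(z)⁻¹ • N(z)`, where `S (z, 1) = (N z, d z)` is affine in `z`. With `ξ = -d⁻¹ • d'` one has
`(d⁻¹)' = d⁻¹ • ξ`, hence `F' = d⁻¹ • N' + ξ ⊗ F` and `ξ' = ξ ⊗ ξ`. Differentiating once more,
everything regroups into `F''(u, u') = ξ(u) • F'(u') + ξ(u') • F'(u)`. The assignment `S ↦ F` is
functorial, so by the chain rule the map induced by `S⁻¹` provides the inverse of `F'`.
-/

open ContinuousLinearMap Topology

section ProjectiveMap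

variable {𝕜 E E' E'' : Type*} [NontriviallyNormedField 𝕜]
  [NormedAddCommGroup E] [NormedSpace 𝕜 E] [NormedAddCommGroup E'] [NormedSpace 𝕜 E']
  [NormedAddCommGroup E''] [NormedSpace 𝕜 E'']

/-- The expression in affine charts of the map between projective spaces induced by a linear map
`S` of homogeneous coordinates; the chart `E ⊂ P(E × 𝕜)` is `z ↦ [z : 1]`. It takes the junk value
`0` at the points that `S` sends to infinity. -/
noncomputable def projectiveMap (S : E × 𝕜 →L[𝕜] E' × 𝕜) (z : E) : E' :=
  (S (z, 1)).2⁻¹ • (S (z, 1)).1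

/-- The covector `ξ(z)` of the projective map induced by `S`: minus the logarithmic differential of
its denominator `z ↦ (S (z, 1)).2`. -/
noncomputable def projectiveForm (S : E × 𝕜 →L[𝕜] E' × 𝕜) (z : E) : E →L[𝕜] 𝕜 :=
  -(S (z, 1)).2⁻¹ • (snd 𝕜 E' 𝕜 ∘L S ∘L inl 𝕜 E 𝕜)

theorem projectiveMap_id (z : E) : projectiveMap (.id 𝕜 (E × 𝕜)) z = z := by
  simp [projectiveMap]

theorem hasFDerivAt_apply_prodMk_left (L : E × E' →L[𝕜] E'') (z : E) (a : E') :
    HasFDerivAt (fun y => L (y, a)) (L ∘L inl 𝕜 E E') z :=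
  L.hasFDerivAt.comp z (hasFDerivAt_prodMk_left z a)

variable {S : E × 𝕜 →L[𝕜] E' × 𝕜} {z : E}

theorem apply_prodMk_one_eq_smul (hz : (S (z, 1)).2 ≠ 0) :
    S (z, 1) = (S (z, 1)).2 • (projectiveMap S z, 1) := by
  ext <;> simp [projectiveMap, hz]

theorem comp_apply_prodMk_one (T : E' × 𝕜 →L[𝕜] E'' × 𝕜) (hz : (S (z, 1)).2 ≠ 0) :
    (T ∘L S) (z, 1) = (S (z, 1)).2 • T (projectiveMap S z, 1) := by
  rw [← map_smul, ← apply_prodMk_one_eq_smul hz, comp_apply]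

theorem projectiveMap_comp (T : E' × 𝕜 →L[𝕜] E'' × 𝕜) (hz : (S (z, 1)).2 ≠ 0) :
    projectiveMap (T ∘L S) z = projectiveMap T (projectiveMap S z) := by
  unfold projectiveMap
  rw [comp_apply_prodMk_one T hz, Prod.smul_fst, Prod.smul_snd, smul_eq_mul, mul_inv_rev, mul_smul,
    inv_smul_smul₀ hz, projectiveMap]

theorem eventually_apply_prodMk_one_ne_zero (hz : (S (z, 1)).2 ≠ 0) :
    ∀ᶠ y in 𝓝 z, (S (y, 1)).2 ≠ 0 := by
  have hcont : ContinuousAt (fun y => (S (y, 1)).2) z := by fun_prop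
  exact hcont.eventually_ne hz

theorem contDiffAt_projectiveMap {n : WithTop ℕ∞} (hz : (S (z, 1)).2 ≠ 0) :
    ContDiffAt 𝕜 n (projectiveMap S) z := by
  unfold projectiveMap
  fun_prop (disch := exact hz)

theorem hasFDerivAt_inv_denominator (hz : (S (z, 1)).2 ≠ 0) :
    HasFDerivAt (fun y => (S (y, 1)).2⁻¹) ((S (z, 1)).2⁻¹ • projectiveForm S z) z := by
  have hd : HasFDerivAt (fun y => (S (y, 1)).2) (snd 𝕜 E' 𝕜 ∘L S ∘L inl 𝕜 E 𝕜) z :=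
    hasFDerivAt_apply_prodMk_left (snd 𝕜 E' 𝕜 ∘L S) z 1
  refine ((hasDerivAt_inv hz).comp_hasFDerivAt z hd).congr_fderiv ?_
  rw [projectiveForm, smul_smul, mul_neg, sq, mul_inv]

theorem hasFDerivAt_projectiveForm (hz : (S (z, 1)).2 ≠ 0) :
    HasFDerivAt (projectiveForm S) ((projectiveForm S z).smulRight (projectiveForm S z)) z := by
  refine ((hasFDerivAt_inv_denominator hz).neg.smul_const
    (snd 𝕜 E' 𝕜 ∘L S ∘L inl 𝕜 E 𝕜)).congr_fderiv ?_
  ext u u'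
  simp only [projectiveForm, smulRight_apply, neg_apply, smul_apply, comp_apply, smul_eq_mul]
  ring

theorem hasFDerivAt_projectiveMap (hz : (S (z, 1)).2 ≠ 0) :
    HasFDerivAt (projectiveMap S)
      ((S (z, 1)).2⁻¹ • (fst 𝕜 E' 𝕜 ∘L S ∘L inl 𝕜 E 𝕜) +
        (projectiveForm S z).smulRight (projectiveMap S z)) z := by
  have hN : HasFDerivAt (fun y => (S (y, 1)).1) (fst 𝕜 E' 𝕜 ∘L S ∘L inl 𝕜 E 𝕜) z :=
    hasFDerivAt_apply_prodMk_left (fst 𝕜 E' 𝕜 ∘L S) z 1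
  refine ((hasFDerivAt_inv_denominator hz).smul hN).congr_fderiv ?_
  ext u
  simp [projectiveMap, smul_smul, mul_comm]

theorem hasFDerivAt_fderiv_projectiveMap (hz : (S (z, 1)).2 ≠ 0) :
    HasFDerivAt (fderiv 𝕜 (projectiveMap S))
      ((projectiveForm S z).smulRight (fderiv 𝕜 (projectiveMap S) z) +
        smulRightL 𝕜 E E' (projectiveForm S z) ∘L fderiv 𝕜 (projectiveMap S) z) z := by
  have hformula : fderiv 𝕜 (projectiveMap S) =ᶠ[𝓝 z] fun y =>
      (S (y, 1)).2⁻¹ • (fst 𝕜 E' 𝕜 ∘L S ∘L inl 𝕜 E 𝕜) +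
        smulRightL 𝕜 E E' (projectiveForm S y) (projectiveMap S y) :=
    (eventually_apply_prodMk_one_ne_zero hz).mono fun y hy => (hasFDerivAt_projectiveMap hy).fderiv
  have hF := (hasFDerivAt_projectiveMap hz).differentiableAt.hasFDerivAt
  have hξF := (smulRightL 𝕜 E E').hasFDerivAt_of_bilinear (hasFDerivAt_projectiveForm hz) hF
  have hA := (hasFDerivAt_inv_denominator hz).smul_const (fst 𝕜 E' 𝕜 ∘L S ∘L inl 𝕜 E 𝕜)
  refine ((hA.add hξF).congr_of_eventuallyEq hformula).congr_fderiv ?_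
  ext u u'
  simp only [(hasFDerivAt_projectiveMap hz).fderiv, precompR_apply, precompL_apply, compL_apply,
    smulRightL_apply_apply, add_apply, smulRight_apply, smul_apply, comp_apply, smul_eq_mul]
  module

theorem fderiv_fderiv_projectiveMap_apply (hz : (S (z, 1)).2 ≠ 0) (u u' : E) :
    fderiv 𝕜 (fderiv 𝕜 (projectiveMap S)) z u u' =
      fderiv 𝕜 (projectiveMap S) z (projectiveForm S z u • u' + projectiveForm S z u' • u) := by
  simp [(hasFDerivAt_fderiv_projectiveMap hz).fderiv]

theorem apply_projectiveMap_ne_zero_of_comp_eq_id {T : E' × 𝕜 →L[𝕜] E × 𝕜}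
    (hTS : T ∘L S = .id 𝕜 _) (hz : (S (z, 1)).2 ≠ 0) : (T (projectiveMap S z, 1)).2 ≠ 0 := by
  have h := congrArg Prod.snd (comp_apply_prodMk_one T hz)
  rw [hTS] at h
  exact right_ne_zero_of_mul (h.symm.trans_ne one_ne_zero)

theorem projectiveMap_projectiveMap_of_comp_eq_id {T : E' × 𝕜 →L[𝕜] E × 𝕜}
    (hTS : T ∘L S = .id 𝕜 _) (hz : (S (z, 1)).2 ≠ 0) :
    projectiveMap T (projectiveMap S z) = z := by
  rw [← projectiveMap_comp T hz, hTS, projectiveMap_id]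

theorem fderiv_projectiveMap_comp_eq_id {T : E' × 𝕜 →L[𝕜] E × 𝕜}
    (hTS : T ∘L S = .id 𝕜 _) (hz : (S (z, 1)).2 ≠ 0) :
    fderiv 𝕜 (projectiveMap T) (projectiveMap S z) ∘L fderiv 𝕜 (projectiveMap S) z =
      .id 𝕜 E := by
  have hT := (hasFDerivAt_projectiveMap
    (apply_projectiveMap_ne_zero_of_comp_eq_id hTS hz)).differentiableAt
  have hS := (hasFDerivAt_projectiveMap hz).differentiableAt
  have hid : projectiveMap T ∘ projectiveMap S =ᶠ[𝓝 z] id :=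
    (eventually_apply_prodMk_one_ne_zero hz).mono fun _ =>
      projectiveMap_projectiveMap_of_comp_eq_id hTS
  rw [← fderiv_comp z hT hS, hid.fderiv_eq, fderiv_id]

theorem isInvertible_fderiv_projectiveMap (hS : S.IsInvertible) (hz : (S (z, 1)).2 ≠ 0) :
    (fderiv 𝕜 (projectiveMap S) z).IsInvertible := by
  have hz' := apply_projectiveMap_ne_zero_of_comp_eq_id hS.inverse_comp_self hz
  refine .of_inverse (g := fderiv 𝕜 (projectiveMap S.inverse) (projectiveMap S z)) ?_
    (fderiv_projectiveMap_comp_eq_id hS.inverse_comp_self hz)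
  simpa only [projectiveMap_projectiveMap_of_comp_eq_id hS.inverse_comp_self hz] using
    fderiv_projectiveMap_comp_eq_id hS.self_comp_inverse hz'

end ProjectiveMap

theorem isInvertible_of_bijective {𝕜 E E' : Type*} [NontriviallyNormedField 𝕜]
    [NormedAddCommGroup E] [NormedSpace 𝕜 E] [CompleteSpace E]
    [NormedAddCommGroup E'] [NormedSpace 𝕜 E'] [CompleteSpace E']
    {f : E →L[𝕜] E'} (hf : Function.Bijective f) : f.IsInvertible :=
  ⟨.ofBijective f (LinearMap.ker_eq_bot.2 hf.1) (LinearMap.range_eq_top.2 hf.2),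
    ContinuousLinearEquiv.coe_ofBijective ..⟩

section Homogenization

variable {𝕜 E E' : Type*} [NontriviallyNormedField 𝕜]
  [NormedAddCommGroup E] [NormedSpace 𝕜 E] [NormedAddCommGroup E'] [NormedSpace 𝕜 E']

/-- The linear map `S (z, s) = (A z + s • v, w z + c * s)` of homogeneous coordinates that induces
the fractional linear map `z ↦ (w z + c)⁻¹ • (A z + v)`. -/
def homogenization (A : E →L[𝕜] E') (v : E') (w : E →L[𝕜] 𝕜) (c : 𝕜) :
    E × 𝕜 →L[𝕜] E' × 𝕜 :=
  (A ∘L fst 𝕜 E 𝕜 + (snd 𝕜 E 𝕜).smulRight v).prod (w ∘L fst 𝕜 E 𝕜 + c • snd 𝕜 E 𝕜)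

theorem homogenization_apply (A : E →L[𝕜] E') (v : E') (w : E →L[𝕜] 𝕜) (c : 𝕜) (z : E) (s : 𝕜) :
    homogenization A v w c (z, s) = (A z + s • v, w z + c * s) :=
  rfl

theorem projectiveMap_homogenization (A : E →L[𝕜] E') (v : E') (w : E →L[𝕜] 𝕜) (c : 𝕜) (z : E) :
    projectiveMap (homogenization A v w c) z = (w z + c)⁻¹ • (A z + v) := by
  simp [projectiveMap, homogenization_apply]

theorem projectiveForm_homogenization_apply (A : E →L[𝕜] E') (v : E') (w : E →L[𝕜] 𝕜) (c : 𝕜)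
    (z u : E) : projectiveForm (homogenization A v w c) z u = -(w z + c)⁻¹ * w u := by
  simp [projectiveForm, homogenization_apply]

theorem stmt2_general (n : WithTop ℕ∞) (A : E →L[𝕜] E') (v : E') (w : E →L[𝕜] 𝕜) (c : 𝕜)
    (hS : (homogenization A v w c).IsInvertible)
    (U : Set E) (hU : IsOpen U) (hden : ∀ z ∈ U, w z + c ≠ 0)
    (F : E → E') (hF : ∀ z ∈ U, F z = (w z + c)⁻¹ • (A z + v)) :
    ContDiffOn 𝕜 n F U ∧
      (∀ z ∈ U, ∃ G : E ≃L[𝕜] E', (fderiv 𝕜 F z : E →L[𝕜] E') = G) ∧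
      ∀ z ∈ U, ∀ u u' : E,
        (fderiv 𝕜 F z).inverse (fderiv 𝕜 (fderiv 𝕜 F) z u u') =
          (-(w z + c)⁻¹ * w u) • u' + (-(w z + c)⁻¹ * w u') • u := by
  set S := homogenization A v w c
  have hne : ∀ z ∈ U, (S (z, 1)).2 ≠ 0 := by simpa [S, homogenization_apply] using hden
  have hFS : Set.EqOn F (projectiveMap S) U := fun z hz => by
    rw [hF z hz, projectiveMap_homogenization]
  have hnhds : ∀ z ∈ U, F =ᶠ[𝓝 z] projectiveMap S := fun z hz =>
    hFS.eventuallyEq_of_mem (hU.mem_nhds hz)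
  have hinv : ∀ z ∈ U, (fderiv 𝕜 F z).IsInvertible := fun z hz => by
    rw [(hnhds z hz).fderiv_eq]
    exact isInvertible_fderiv_projectiveMap hS (hne z hz)
  refine ⟨fun z hz => ?_, fun z hz => ?_, fun z hz u u' => ?_⟩
  · exact ((contDiffAt_projectiveMap (hne z hz)).congr_of_eventuallyEq
      (hnhds z hz)).contDiffWithinAt
  · obtain ⟨G, hG⟩ := hinv z hz
    exact ⟨G, hG.symm⟩
  · rw [(hinv z hz).inverse_apply_eq, (hnhds z hz).fderiv.fderiv_eq, (hnhds z hz).fderiv_eq,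
      fderiv_fderiv_projectiveMap_apply (hne z hz), projectiveForm_homogenization_apply,
      projectiveForm_homogenization_apply]

end Homogenization

theorem stmt2 {E : Type*} [NormedAddCommGroup E] [NormedSpace ℝ E] [FiniteDimensional ℝ E]
    (A : E →L[ℝ] E) (v : E) (w : E →L[ℝ] ℝ) (c : ℝ)
    (hS : Function.Bijective fun zs : E × ℝ => (A zs.1 + zs.2 • v, w zs.1 + c * zs.2))
    (U : Set E) (hU : IsOpen U) (hden : ∀ z ∈ U, w z + c ≠ 0)
    (F : E → E) (hF : ∀ z, F z = (w z + c)⁻¹ • (A z + v)) :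
    ContDiffOn ℝ 2 F U ∧
      (∀ z ∈ U, ∃ G : E ≃L[ℝ] E, (fderiv ℝ F z : E →L[ℝ] E) = G) ∧
      ∀ z ∈ U, ∀ u u' : E,
        (fderiv ℝ F z).inverse (fderiv ℝ (fderiv ℝ F) z u u') =
          (-(w z + c)⁻¹ * w u) • u' + (-(w z + c)⁻¹ * w u') • u := by
  have := FiniteDimensional.complete ℝ E
  exact stmt2_general 2 A v w c (isInvertible_of_bijective hS) U hU hden F fun z _ => hF z
end

section
/- Let J ⊆ ℝ be an open interval and β₁, β₂ : J → ℝ continuous with β₁(x) > 0 and β₂(x) > 0 for all x ∈ J. If the barycentric maps coincide, i.e. (∫ₛᵗ x·β₁(x) dx)/(∫ₛᵗ β₁(x) dx) = (∫ₛᵗ x·β₂(x) dx)/(∫ₛᵗ β₂(x) dx) for all s, t ∈ J with s < t, then there exists a constant c > 0 such that β₂(x) = c·β₁(x) for all x ∈ J. -/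
/-!
Write `F(t) = ∫ₛᵗ β₁`, `G(t) = ∫ₛᵗ β₂` for the masses and `P`, `Q` for the corresponding first
moments, so that equality of the barycenters reads `P G = Q F`. Differentiating this identity in `t`
and eliminating `Q` with the identity itself leaves `(t F - P) (β₁(t) G - β₂(t) F) = 0`. The first
factor is `∫ₛᵗ (t - x) β₁(x) dx ≠ 0`, so `β₁(t) G = β₂(t) F`. Exchanging the two endpoints only
changes the signs of `F` and `G`, so `β₁(s) G = β₂(s) F` as well, and the ratio `β₂ / β₁` takes the
same value at `s` and at `t`. The coordinate `x` may be any continuous injective function.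
-/

open Set intervalIntegral

section UnorderedInterval

variable {a b : ℝ} {φ f g : ℝ → ℝ}

theorem integral_ne_zero_of_continuousOn_of_ne_zero (hab : a ≠ b)
    (hf : ContinuousOn f (uIcc a b)) (hf₀ : ∀ x ∈ uIoo a b, f x ≠ 0) :
    ∫ x in a..b, f x ≠ 0 := by
  obtain ⟨c, hc, hfc⟩ := exists_eq_interval_average hab hf
  rw [interval_average_eq_div] at hfc
  intro hint
  exact hf₀ c hc (by rw [hfc, hint, zero_div])

theorem hasDerivWithinAt_integral_right_uIcc {E : Type*} [NormedAddCommGroup E] [NormedSpace ℝ E]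
    [CompleteSpace E] {f : ℝ → E} (hf : ContinuousOn f (uIcc a b)) :
    HasDerivWithinAt (fun u => ∫ x in a..u, f x) (f b) (uIcc a b) b :=
  have : Fact (b ∈ uIcc a b) := ⟨right_mem_uIcc⟩
  integral_hasDerivWithinAt_right hf.intervalIntegrable
    (hf.stronglyMeasurableAtFilter_nhdsWithin measurableSet_uIcc b) (hf b right_mem_uIcc)

theorem mul_integral_sub_integral_mul_ne_zero (hab : a ≠ b) (hφ : ContinuousOn φ (uIcc a b))
    (hφ_inj : InjOn φ (uIcc a b)) (hf : ContinuousOn f (uIcc a b))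
    (hf₀ : ∀ x ∈ uIoo a b, f x ≠ 0) :
    φ b * (∫ x in a..b, f x) - ∫ x in a..b, φ x * f x ≠ 0 := by
  have hcont : ContinuousOn (fun x => φ b * f x - φ x * f x) (uIcc a b) :=
    (continuousOn_const.mul hf).sub (hφ.mul hf)
  rw [← integral_const_mul,
    ← integral_sub (hf.intervalIntegrable.const_mul _) (hφ.fun_mul hf).intervalIntegrable]
  refine integral_ne_zero_of_continuousOn_of_ne_zero hab hcont fun x hx => ?_
  have hxb : φ b ≠ φ x :=
    hφ_inj.ne right_mem_uIcc (uIoo_subset_uIcc_self hx) fun h => right_notMem_uIoo (h ▸ hx)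
  rw [← sub_mul]
  exact mul_ne_zero (sub_ne_zero.2 hxb) (hf₀ x hx)

theorem right_mul_integral_eq_of_moments_eq (hab : a ≠ b) (hφ : ContinuousOn φ (uIcc a b))
    (hφ_inj : InjOn φ (uIcc a b)) (hf : ContinuousOn f (uIcc a b))
    (hf₀ : ∀ x ∈ uIoo a b, f x ≠ 0) (hg : ContinuousOn g (uIcc a b))
    (hmoments : ∀ u ∈ uIcc a b, (∫ x in a..u, φ x * f x) * (∫ x in a..u, g x) =
      (∫ x in a..u, φ x * g x) * (∫ x in a..u, f x)) :
    f b * (∫ x in a..b, g x) = g b * (∫ x in a..b, f x) := by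
  have hderiv_f := (hasDerivWithinAt_integral_right_uIcc (hφ.fun_mul hf)).mul
    (hasDerivWithinAt_integral_right_uIcc hg)
  have hderiv_g := (hasDerivWithinAt_integral_right_uIcc (hφ.fun_mul hg)).mul
    (hasDerivWithinAt_integral_right_uIcc hf)
  have hderiv_eq := (uniqueDiffOn_uIcc hab b right_mem_uIcc).eq_deriv _ hderiv_f
    (hderiv_g.congr hmoments (hmoments b right_mem_uIcc))
  apply mul_left_cancel₀ (mul_integral_sub_integral_mul_ne_zero hab hφ hφ_inj hf hf₀)
  linear_combination (∫ x in a..b, f x) * hderiv_eq - f b * hmoments b right_mem_uIcc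

end UnorderedInterval

/-- The barycenter, in the coordinate `φ`, of the mass distribution with density `β` between `s` and
`t`; the barycentric map is `barycenter id β`. Its value is `0` if the total mass vanishes. -/
noncomputable def barycenter (φ β : ℝ → ℝ) (s t : ℝ) : ℝ :=
  (∫ x in s..t, φ x * β x) / ∫ x in s..t, β x

theorem barycenter_self (φ β : ℝ → ℝ) (s : ℝ) : barycenter φ β s s = 0 := by
  simp [barycenter]

theorem barycenter_comm (φ β : ℝ → ℝ) (s t : ℝ) : barycenter φ β s t = barycenter φ β t s := by
  simp only [barycenter, integral_symm t s, neg_div_neg_eq]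

theorem barycenter_mul_integral (φ : ℝ → ℝ) {β : ℝ → ℝ} {s t : ℝ}
    (hβ : ContinuousOn β (uIcc s t)) (hβ₀ : ∀ x ∈ uIoo s t, β x ≠ 0) :
    barycenter φ β s t * (∫ x in s..t, β x) = ∫ x in s..t, φ x * β x := by
  rcases eq_or_ne s t with rfl | hst
  · simp only [integral_same, mul_zero]
  · exact div_mul_cancel₀ _ (integral_ne_zero_of_continuousOn_of_ne_zero hst hβ hβ₀)

section Density

variable {J : Set ℝ} {φ β₁ β₂ : ℝ → ℝ}

theorem barycenter_eq_of_forall_lt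
    (hbar : ∀ s ∈ J, ∀ t ∈ J, s < t → barycenter φ β₁ s t = barycenter φ β₂ s t)
    {s t : ℝ} (hs : s ∈ J) (ht : t ∈ J) : barycenter φ β₁ s t = barycenter φ β₂ s t := by
  rcases lt_trichotomy s t with hst | rfl | hts
  · exact hbar s hs t ht hst
  · rw [barycenter_self, barycenter_self]
  · rw [barycenter_comm φ β₁, barycenter_comm φ β₂, hbar t ht s hs hts]

theorem right_mul_integral_eq_of_barycenter_eq {s t : ℝ} (hst : s ≠ t)
    (hφ : ContinuousOn φ (uIcc s t)) (hφ_inj : InjOn φ (uIcc s t))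
    (h₁ : ContinuousOn β₁ (uIcc s t)) (h₂ : ContinuousOn β₂ (uIcc s t))
    (hβ₁ : ∀ x ∈ uIoo s t, β₁ x ≠ 0) (hβ₂ : ∀ x ∈ uIoo s t, β₂ x ≠ 0)
    (hbar : ∀ u ∈ uIcc s t, barycenter φ β₁ s u = barycenter φ β₂ s u) :
    β₁ t * (∫ x in s..t, β₂ x) = β₂ t * (∫ x in s..t, β₁ x) := by
  refine right_mul_integral_eq_of_moments_eq hst hφ hφ_inj h₁ hβ₁ h₂ fun u hu => ?_
  have hIcc : uIcc s u ⊆ uIcc s t := uIcc_subset_uIcc_left hu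
  have hIoo : uIoo s u ⊆ uIoo s t := uIoo_subset_Ioo left_mem_uIcc hu
  rw [← barycenter_mul_integral φ (h₁.mono hIcc) fun x hx => hβ₁ x (hIoo hx),
    ← barycenter_mul_integral φ (h₂.mono hIcc) fun x hx => hβ₂ x (hIoo hx), hbar u hu]
  exact mul_right_comm _ _ _

theorem mul_eq_mul_of_barycenter_eq (hJ : J.OrdConnected) (hφ : ContinuousOn φ J)
    (hφ_inj : InjOn φ J) (h₁ : ContinuousOn β₁ J) (h₂ : ContinuousOn β₂ J)
    (hβ₁ : ∀ x ∈ J, β₁ x ≠ 0) (hβ₂ : ∀ x ∈ J, β₂ x ≠ 0)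
    (hbar : ∀ s ∈ J, ∀ t ∈ J, s < t → barycenter φ β₁ s t = barycenter φ β₂ s t)
    {s t : ℝ} (hs : s ∈ J) (ht : t ∈ J) : β₂ s * β₁ t = β₂ t * β₁ s := by
  rcases eq_or_ne s t with rfl | hst
  · rfl
  have right_mul_integral_eq {p q : ℝ} (hp : p ∈ J) (hq : q ∈ J) (hpq : p ≠ q) :
      β₁ q * (∫ x in p..q, β₂ x) = β₂ q * (∫ x in p..q, β₁ x) := by
    have hIcc : uIcc p q ⊆ J := hJ.uIcc_subset hp hq
    have hIoo : uIoo p q ⊆ J := uIoo_subset_uIcc_self.trans hIcc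
    exact right_mul_integral_eq_of_barycenter_eq hpq (hφ.mono hIcc) (hφ_inj.mono hIcc)
      (h₁.mono hIcc) (h₂.mono hIcc) (fun x hx => hβ₁ x (hIoo hx)) (fun x hx => hβ₂ x (hIoo hx))
      fun u hu => barycenter_eq_of_forall_lt hbar hp (hIcc hu)
  have hright := right_mul_integral_eq hs ht hst
  have hleft := right_mul_integral_eq ht hs hst.symm
  have hIcc : uIcc s t ⊆ J := hJ.uIcc_subset hs ht
  have hmass : ∫ x in s..t, β₁ x ≠ 0 :=
    integral_ne_zero_of_continuousOn_of_ne_zero hst (h₁.mono hIcc)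
      fun x hx => hβ₁ x (hIcc (uIoo_subset_uIcc_self hx))
  simp only [integral_symm s t] at hleft
  apply mul_right_cancel₀ hmass
  linear_combination β₁ s * hright + β₁ t * hleft

theorem stmt17_general (hJ : J.OrdConnected) (hφ : ContinuousOn φ J) (hφ_inj : InjOn φ J)
    (h₁ : ContinuousOn β₁ J) (h₂ : ContinuousOn β₂ J)
    (hβ₁ : ∀ x ∈ J, 0 < β₁ x) (hβ₂ : ∀ x ∈ J, 0 < β₂ x)
    (hbar : ∀ s ∈ J, ∀ t ∈ J, s < t → barycenter φ β₁ s t = barycenter φ β₂ s t) :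
    ∃ c : ℝ, 0 < c ∧ ∀ x ∈ J, β₂ x = c * β₁ x := by
  rcases J.eq_empty_or_nonempty with rfl | ⟨p, hp⟩
  · exact ⟨1, one_pos, fun x hx => hx.elim⟩
  · refine ⟨β₂ p / β₁ p, div_pos (hβ₂ p hp) (hβ₁ p hp), fun x hx => ?_⟩
    rw [div_mul_eq_mul_div, eq_div_iff (hβ₁ p hp).ne']
    exact mul_eq_mul_of_barycenter_eq hJ hφ hφ_inj h₁ h₂ (fun y hy => (hβ₁ y hy).ne')
      (fun y hy => (hβ₂ y hy).ne') hbar hx hp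

end Density

theorem stmt17 (J : Set ℝ) (hJo : IsOpen J) (hJc : J.OrdConnected)
    (β₁ β₂ : ℝ → ℝ) (h1 : ContinuousOn β₁ J) (h2 : ContinuousOn β₂ J)
    (hp1 : ∀ x ∈ J, 0 < β₁ x) (hp2 : ∀ x ∈ J, 0 < β₂ x)
    (hbar : ∀ s ∈ J, ∀ t ∈ J, s < t →
      (∫ x in s..t, x * β₁ x) / (∫ x in s..t, β₁ x) =
        (∫ x in s..t, x * β₂ x) / (∫ x in s..t, β₂ x)) :
    ∃ c : ℝ, 0 < c ∧ ∀ x ∈ J, β₂ x = c * β₁ x :=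
  stmt17_general hJc continuousOn_id (injOn_id J) h1 h2 hp1 hp2 hbar
end
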